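/- (Dirichlet half-line model problem.) Let a > 0, let κ satisfy 0 < κ ≤ 1/a, let k be a nonnegative integer, let G ∈ ℝ, and let F ∈ ℰ(κ). Then there exists U ∈ ℰ(κ) such that a U''(ν) + 2ν U'(ν) − 2k U(ν) = −4 F(ν) for all ν ≥ 0 and U(0) = G. Equivalently, u(ν,t) := t^{k/2} U(ν/(2√t)) satisfies (∂_t − a ∂_ν²) u = t^{k/2−1} F(ν/(2√t)) for ν ≥ 0, t > 0, with boundary value u(0,t) = t^{k/2} G. -/

import Mathlib

open Real

/-- The class `ℰ(κ)`: smooth functions on `[0,∞)` (realized as smooth functions on `ℝ`)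
all of whose derivatives satisfy Gaussian decay estimates
`|U^{(j)}(τ)| ≤ C_{j,κ′} exp(−κ′ τ²)` on `[0,∞)` for every `0 < κ′ < κ`. -/
def MemGaussianClass (κ : ℝ) (U : ℝ → ℝ) : Prop :=
  ContDiff ℝ (⊤ : ℕ∞) U ∧
    ∀ (j : ℕ) (κ' : ℝ), 0 < κ' → κ' < κ →
      ∃ C : ℝ, ∀ τ : ℝ, 0 ≤ τ →
        |iteratedDeriv j U τ| ≤ C * Real.exp (-κ' * τ ^ 2)

open Filter Topology MeasureTheory

/-- Gaussian decay on `[0,∞)` at every rate below `κ`. -/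
def GaussianDecay (κ : ℝ) (U : ℝ → ℝ) : Prop :=
  ∀ κ' : ℝ, 0 < κ' → κ' < κ →
    ∃ C : ℝ, ∀ τ : ℝ, 0 ≤ τ → |U τ| ≤ C * exp (-κ' * τ ^ 2)

/-- Gaussian decay of the derivatives up to order `n`. -/
def GaussianDecayUpTo (κ : ℝ) : ℕ → (ℝ → ℝ) → Prop
  | 0, U => GaussianDecay κ U
  | n + 1, U => GaussianDecay κ U ∧ GaussianDecayUpTo κ n (deriv U)

namespace GaussianDecay

variable {κ : ℝ} {U V : ℝ → ℝ}

lemma add (hU : GaussianDecay κ U) (hV : GaussianDecay κ V) :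
    GaussianDecay κ (fun x => U x + V x) := by
  intro κ' h0 h1
  obtain ⟨C, hC⟩ := hU κ' h0 h1
  obtain ⟨D, hD⟩ := hV κ' h0 h1
  refine ⟨C + D, fun τ hτ => (abs_add_le _ _).trans ?_⟩
  linarith [hC τ hτ, hD τ hτ]

lemma const_mul (c : ℝ) (hU : GaussianDecay κ U) : GaussianDecay κ (fun x => c * U x) := by
  intro κ' h0 h1
  obtain ⟨C, hC⟩ := hU κ' h0 h1
  refine ⟨|c| * C, fun τ hτ => ?_⟩
  rw [abs_mul, mul_assoc]
  exact mul_le_mul_of_nonneg_left (hC τ hτ) (abs_nonneg c)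

/-- A linear factor in the bound may be absorbed into the Gaussian. -/
lemma of_le_mul (h : ∀ κ' : ℝ, 0 < κ' → κ' < κ →
    ∃ C : ℝ, ∀ τ : ℝ, 0 ≤ τ → |U τ| ≤ τ * (C * exp (-κ' * τ ^ 2))) :
    GaussianDecay κ U := by
  intro κ' h0 h1
  obtain ⟨κ'', h2, h3⟩ := exists_between h1
  obtain ⟨C, hC⟩ := h κ'' (h0.trans h2) h3
  obtain ⟨δ, hδ⟩ : ∃ δ, δ = κ'' - κ' := ⟨_, rfl⟩
  have hδ0 : 0 < δ := by linarith
  refine ⟨(1 + 1 / δ) * |C|, fun τ hτ => (hC τ hτ).trans ?_⟩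
  have key : τ ≤ (1 + 1 / δ) * exp (δ * τ ^ 2) := by
    have h4 : δ * τ ^ 2 + 1 ≤ exp (δ * τ ^ 2) := add_one_le_exp _
    have h5 : (1 + 1 / δ) * (δ * τ ^ 2 + 1) = δ * τ ^ 2 + 1 + τ ^ 2 + 1 / δ := by
      field_simp
      ring
    have h6 : 0 < 1 / δ := by positivity
    have h7 : 0 ≤ δ * τ ^ 2 := by positivity
    have h8 := mul_le_mul_of_nonneg_left h4 (by positivity : 0 ≤ 1 + 1 / δ)
    nlinarith [sq_nonneg (τ - 1)]
  have hexp : exp (-κ' * τ ^ 2) = exp (δ * τ ^ 2) * exp (-κ'' * τ ^ 2) := by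
    rw [← exp_add, hδ]
    ring_nf
  calc τ * (C * exp (-κ'' * τ ^ 2)) ≤ τ * (|C| * exp (-κ'' * τ ^ 2)) := by
        gcongr
        exact le_abs_self C
    _ ≤ ((1 + 1 / δ) * exp (δ * τ ^ 2)) * (|C| * exp (-κ'' * τ ^ 2)) := by gcongr
    _ = (1 + 1 / δ) * |C| * exp (-κ' * τ ^ 2) := by rw [hexp]; ring

lemma id_mul (hU : GaussianDecay κ U) : GaussianDecay κ (fun x => x * U x) := by
  refine of_le_mul fun κ' h0 h1 => ?_
  obtain ⟨C, hC⟩ := hU κ' h0 h1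
  refine ⟨C, fun τ hτ => ?_⟩
  rw [abs_mul, abs_of_nonneg hτ]
  exact mul_le_mul_of_nonneg_left (hC τ hτ) hτ

lemma tendsto_zero (hκ : 0 < κ) (hU : GaussianDecay κ U) : Tendsto U atTop (𝓝 0) := by
  obtain ⟨κ', h0, h1⟩ := exists_between hκ
  obtain ⟨C, hC⟩ := hU κ' h0 h1
  have hlim : Tendsto (fun τ : ℝ => C * exp (-κ' * τ ^ 2)) atTop (𝓝 (C * 0)) := by
    refine Tendsto.const_mul C (tendsto_exp_atBot.comp ?_)
    exact (tendsto_pow_atTop two_ne_zero).const_mul_atTop_of_neg (by linarith)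
  rw [mul_zero] at hlim
  refine squeeze_zero_norm' ?_ hlim
  filter_upwards [eventually_ge_atTop 0] with τ hτ using hC τ hτ

lemma integrableOn (hκ : 0 < κ) (hU : GaussianDecay κ U) (hc : Continuous U) :
    IntegrableOn U (Set.Ioi 0) := by
  obtain ⟨κ', h0, h1⟩ := exists_between hκ
  obtain ⟨C, hC⟩ := hU κ' h0 h1
  refine Integrable.mono' ((integrable_exp_neg_mul_sq h0).integrableOn.const_mul C)
    hc.aestronglyMeasurable ?_
  exact (ae_restrict_mem measurableSet_Ioi).mono fun τ hτ => hC τ (le_of_lt hτ)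

lemma integral_Ioi (hκ : 0 < κ) (hU : GaussianDecay κ U) (hc : Continuous U) :
    GaussianDecay κ (fun x => ∫ s in Set.Ioi x, U s) := by
  intro κ' h0 h1
  obtain ⟨κ'', h2, h3⟩ := exists_between h1
  obtain ⟨C, hC⟩ := hU κ'' (h0.trans h2) h3
  have hint := integrable_exp_neg_mul_sq (sub_pos.2 h2)
  refine ⟨|C| * ∫ s, exp (-(κ'' - κ') * s ^ 2), fun τ hτ => ?_⟩
  have hsub : Set.Ioi τ ⊆ Set.Ioi (0 : ℝ) := Set.Ioi_subset_Ioi hτ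
  calc |∫ s in Set.Ioi τ, U s| ≤ ∫ s in Set.Ioi τ, |U s| := abs_integral_le_integral_abs
    _ ≤ ∫ s in Set.Ioi τ, |C| * exp (-κ' * τ ^ 2) * exp (-(κ'' - κ') * s ^ 2) := by
        refine setIntegral_mono_on ((hU.integrableOn hκ hc).mono_set hsub).abs
          (hint.const_mul _).integrableOn measurableSet_Ioi fun s hs => ?_
        have hs' : τ < s := hs
        calc |U s| ≤ C * exp (-κ'' * s ^ 2) := hC s (hτ.trans hs'.le)
          _ ≤ |C| * exp (-κ' * τ ^ 2 + -(κ'' - κ') * s ^ 2) := by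
              gcongr
              · exact le_abs_self C
              · nlinarith [mul_le_mul_of_nonneg_left
                  (pow_le_pow_left₀ hτ hs'.le 2) h0.le]
          _ = _ := by rw [exp_add, mul_assoc]
    _ = |C| * exp (-κ' * τ ^ 2) * ∫ s in Set.Ioi τ, exp (-(κ'' - κ') * s ^ 2) :=
        integral_const_mul _ _
    _ ≤ |C| * exp (-κ' * τ ^ 2) * ∫ s, exp (-(κ'' - κ') * s ^ 2) := by
        refine mul_le_mul_of_nonneg_left ?_ (by positivity)
        exact setIntegral_le_integral hint (Eventually.of_forall fun s => (exp_pos _).le)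
    _ = _ := by ring

end GaussianDecay

namespace GaussianDecayUpTo

variable {κ : ℝ} {U V : ℝ → ℝ} {n : ℕ}

lemma decay (h : GaussianDecayUpTo κ n U) : GaussianDecay κ U := by
  cases n with
  | zero => exact h
  | succ n => exact h.1

lemma of_succ (h : GaussianDecayUpTo κ (n + 1) U) : GaussianDecayUpTo κ n U := by
  induction n generalizing U with
  | zero => exact h.1
  | succ n ih => exact ⟨h.1, ih h.2⟩

lemma add (hUs : ContDiff ℝ (⊤ : ℕ∞) U) (hVs : ContDiff ℝ (⊤ : ℕ∞) V)
    (hU : GaussianDecayUpTo κ n U) (hV : GaussianDecayUpTo κ n V) :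
    GaussianDecayUpTo κ n (fun x => U x + V x) := by
  induction n generalizing U V with
  | zero => exact GaussianDecay.add hU hV
  | succ n ih =>
    obtain ⟨hUd, hUs'⟩ := contDiff_infty_iff_deriv.1 hUs
    obtain ⟨hVd, hVs'⟩ := contDiff_infty_iff_deriv.1 hVs
    have hd : deriv (fun x => U x + V x) = fun x => deriv U x + deriv V x :=
      funext fun x => ((hUd x).hasDerivAt.add (hVd x).hasDerivAt).deriv
    exact ⟨hU.1.add hV.1, hd ▸ ih hUs' hVs' hU.2 hV.2⟩

lemma const_mul (c : ℝ) (hUs : ContDiff ℝ (⊤ : ℕ∞) U) (hU : GaussianDecayUpTo κ n U) :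
    GaussianDecayUpTo κ n (fun x => c * U x) := by
  induction n generalizing U with
  | zero => exact GaussianDecay.const_mul c hU
  | succ n ih =>
    obtain ⟨hUd, hUs'⟩ := contDiff_infty_iff_deriv.1 hUs
    have hd : deriv (fun x => c * U x) = fun x => c * deriv U x :=
      funext fun x => ((hUd x).hasDerivAt.const_mul c).deriv
    exact ⟨hU.1.const_mul c, hd ▸ ih hUs' hU.2⟩

lemma id_mul (hUs : ContDiff ℝ (⊤ : ℕ∞) U) (hU : GaussianDecayUpTo κ n U) :
    GaussianDecayUpTo κ n (fun x => x * U x) := by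
  induction n generalizing U with
  | zero => exact GaussianDecay.id_mul hU
  | succ n ih =>
    obtain ⟨hUd, hUs'⟩ := contDiff_infty_iff_deriv.1 hUs
    have hd : deriv (fun x => x * U x) = fun x => U x + x * deriv U x := by
      funext x
      simpa using ((hasDerivAt_id' x).fun_mul (hUd x).hasDerivAt).deriv
    exact ⟨hU.1.id_mul, hd ▸ add hUs (contDiff_id.mul hUs') hU.of_succ (ih hUs' hU.2)⟩

end GaussianDecayUpTo

lemma forall_gaussianDecay_iteratedDeriv_iff {κ : ℝ} {U : ℝ → ℝ} :
    (∀ j, GaussianDecay κ (iteratedDeriv j U)) ↔ ∀ n, GaussianDecayUpTo κ n U := by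
  constructor
  · intro h n
    induction n generalizing U with
    | zero => simpa [GaussianDecayUpTo] using h 0
    | succ n ih =>
      refine ⟨by simpa using h 0, ih fun j => ?_⟩
      rw [← iteratedDeriv_succ']
      exact h (j + 1)
  · intro h j
    induction j generalizing U with
    | zero => simpa [GaussianDecayUpTo] using h 0
    | succ j ih =>
      rw [iteratedDeriv_succ']
      exact ih fun n => (h (n + 1)).2

lemma memGaussianClass_iff {κ : ℝ} {U : ℝ → ℝ} :
    MemGaussianClass κ U ↔ ContDiff ℝ (⊤ : ℕ∞) U ∧ ∀ n, GaussianDecayUpTo κ n U :=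
  and_congr_right fun _ => forall_gaussianDecay_iteratedDeriv_iff

namespace MemGaussianClass

variable {κ : ℝ} {U V : ℝ → ℝ}

lemma decay (hU : MemGaussianClass κ U) : GaussianDecay κ U :=
  (memGaussianClass_iff.1 hU).2 0

lemma differentiable (hU : MemGaussianClass κ U) : Differentiable ℝ U :=
  (contDiff_infty_iff_deriv.1 hU.1).1

lemma deriv (hU : MemGaussianClass κ U) : MemGaussianClass κ (deriv U) := by
  rw [memGaussianClass_iff] at hU ⊢
  exact ⟨(contDiff_infty_iff_deriv.1 hU.1).2, fun n => (hU.2 (n + 1)).2⟩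

lemma add (hU : MemGaussianClass κ U) (hV : MemGaussianClass κ V) :
    MemGaussianClass κ (fun x => U x + V x) := by
  rw [memGaussianClass_iff] at *
  exact ⟨hU.1.add hV.1, fun n => (hU.2 n).add hU.1 hV.1 (hV.2 n)⟩

lemma const_mul (c : ℝ) (hU : MemGaussianClass κ U) :
    MemGaussianClass κ (fun x => c * U x) := by
  rw [memGaussianClass_iff] at *
  exact ⟨contDiff_const.mul hU.1, fun n => (hU.2 n).const_mul c hU.1⟩

/-- An antiderivative vanishing at `+∞` stays in the class. -/
lemma exists_antideriv (hκ : 0 < κ) (hV : MemGaussianClass κ V) :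
    ∃ U, MemGaussianClass κ U ∧ ∀ x, HasDerivAt U (V x) x := by
  have hc : Continuous V := hV.1.continuous
  have hint := hV.decay.integrableOn hκ hc
  obtain ⟨U, hUdef⟩ : ∃ U : ℝ → ℝ,
      U = fun x => (∫ s in (0 : ℝ)..x, V s) - ∫ s in Set.Ioi (0 : ℝ), V s := ⟨_, rfl⟩
  have hder : ∀ x, HasDerivAt U (V x) x := fun x => by
    rw [hUdef]
    exact (hc.integral_hasStrictDerivAt 0 x).hasDerivAt.sub_const _
  have hd : _root_.deriv U = V := funext fun x => (hder x).deriv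
  have hdecay : GaussianDecay κ U := by
    intro κ' h0 h1
    obtain ⟨C, hC⟩ := hV.decay.integral_Ioi hκ hc κ' h0 h1
    refine ⟨C, fun τ hτ => ?_⟩
    have hsplit : U τ = -∫ s in Set.Ioi τ, V s := by
      have := intervalIntegral.integral_Ioi_sub_Ioi hint hτ
      simp only [hUdef]
      linarith
    rw [hsplit, abs_neg]
    exact hC τ hτ
  refine ⟨U, memGaussianClass_iff.2 ⟨?_, fun n => ?_⟩, hder⟩
  · exact contDiff_infty_iff_deriv.2 ⟨fun x => (hder x).differentiableAt, hd ▸ hV.1⟩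
  · cases n with
    | zero => exact hdecay
    | succ n => exact ⟨hdecay, hd ▸ (memGaussianClass_iff.1 hV).2 n⟩

end MemGaussianClass

/-- A decaying smooth solution of the first-order equation has decaying derivatives. -/
lemma memGaussianClass_of_first_order {a κ : ℝ} (ha : 0 < a) {F V : ℝ → ℝ}
    (hF : MemGaussianClass κ F) (hVs : ContDiff ℝ (⊤ : ℕ∞) V) (hV : GaussianDecay κ V)
    (heq : ∀ x, a * deriv V x + 2 * x * V x = -4 * F x) : MemGaussianClass κ V := by
  refine memGaussianClass_iff.2 ⟨hVs, fun n => ?_⟩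
  induction n with
  | zero => exact hV
  | succ n ih =>
    have hd : deriv V = fun x => (-4 / a) * F x + (-2 / a) * (x * V x) := by
      funext x
      have := heq x
      field_simp
      linarith
    have hF' := memGaussianClass_iff.1 hF
    have hxV : ContDiff ℝ (⊤ : ℕ∞) (fun x => x * V x) := contDiff_id.mul hVs
    refine ⟨hV, hd ▸ ?_⟩
    exact ((hF'.2 n).const_mul _ hF'.1).add (contDiff_const.mul hF'.1)
      (contDiff_const.mul hxV) ((ih.id_mul hVs).const_mul _ hxV)

lemma hasDerivAt_exp_mul_sq (c x : ℝ) :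
    HasDerivAt (fun x => exp (c * x ^ 2)) (exp (c * x ^ 2) * (c * (2 * x))) x := by
  have h := ((hasDerivAt_pow 2 x).const_mul c).exp
  simpa using h

lemma memGaussianClass_zero (κ : ℝ) : MemGaussianClass κ (fun _ => 0) :=
  ⟨contDiff_const, fun j κ' _ _ => ⟨0, fun τ _ => by simp⟩⟩

lemma memGaussianClass_gaussian {a κ : ℝ} (ha : 0 < a) (hκ : κ ≤ 1 / a) :
    MemGaussianClass κ (fun x => exp (-(1 / a) * x ^ 2)) := by
  refine memGaussianClass_of_first_order ha (memGaussianClass_zero κ) (by fun_prop) ?_ ?_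
  · intro κ' h0 h1
    refine ⟨1, fun τ hτ => ?_⟩
    rw [abs_of_pos (exp_pos _), one_mul, exp_le_exp]
    nlinarith [sq_nonneg τ]
  · intro x
    rw [(hasDerivAt_exp_mul_sq _ x).deriv]
    field_simp
    ring

lemma exists_first_order_solution {a κ : ℝ} (ha : 0 < a) (hκ : κ ≤ 1 / a) {F : ℝ → ℝ}
    (hF : MemGaussianClass κ F) :
    ∃ V, MemGaussianClass κ V ∧ ∀ x, a * deriv V x + 2 * x * V x = -4 * F x := by
  obtain ⟨g, hg⟩ : ∃ g : ℝ → ℝ, g = fun s => F s * exp (1 / a * s ^ 2) := ⟨_, rfl⟩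
  have hgs : ContDiff ℝ (⊤ : ℕ∞) g := by
    have := hF.1
    rw [hg]
    fun_prop
  obtain ⟨J, hJ⟩ : ∃ J : ℝ → ℝ, J = fun x => ∫ s in (0 : ℝ)..x, g s := ⟨_, rfl⟩
  have hJd : ∀ x, HasDerivAt J (g x) x := fun x => by
    rw [hJ]
    exact (hgs.continuous.integral_hasStrictDerivAt 0 x).hasDerivAt
  have hJs : ContDiff ℝ (⊤ : ℕ∞) J := by
    refine contDiff_infty_iff_deriv.2 ⟨fun x => (hJd x).differentiableAt, ?_⟩
    rwa [funext fun x => (hJd x).deriv]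
  have hJb : ∀ κ' : ℝ, 0 < κ' → κ' < κ → ∃ C : ℝ, ∀ τ : ℝ, 0 ≤ τ →
      |J τ| ≤ C * exp ((1 / a - κ') * τ ^ 2) * τ := by
    intro κ' h0 h1
    obtain ⟨C, hC⟩ := hF.decay κ' h0 h1
    have hC0 : 0 ≤ C := by simpa using (abs_nonneg _).trans (hC 0 le_rfl)
    refine ⟨C, fun τ hτ => ?_⟩
    have hb := intervalIntegral.norm_integral_le_of_norm_le_const (a := 0) (b := τ) (f := g)
      (C := C * exp ((1 / a - κ') * τ ^ 2)) (fun s hs => by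
        rw [Set.uIoc_of_le hτ] at hs
        rw [hg, norm_mul, Real.norm_eq_abs, Real.norm_eq_abs, abs_of_pos (exp_pos _)]
        calc |F s| * exp (1 / a * s ^ 2)
            ≤ C * exp (-κ' * s ^ 2) * exp (1 / a * s ^ 2) := by
              gcongr
              exact hC s hs.1.le
          _ = C * exp ((1 / a - κ') * s ^ 2) := by
              rw [mul_assoc, ← exp_add]
              ring_nf
          _ ≤ C * exp ((1 / a - κ') * τ ^ 2) := by
              have := hs.1.le
              have := hs.2
              have : 0 ≤ 1 / a - κ' := by linarith
              gcongr)
    simpa [hJ, abs_of_nonneg hτ] using hb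
  obtain ⟨V, hV⟩ : ∃ V : ℝ → ℝ, V = fun x => (-4 / a) * (exp (-(1 / a) * x ^ 2) * J x) :=
    ⟨_, rfl⟩
  have heq : ∀ x, a * deriv V x + 2 * x * V x = -4 * F x := by
    intro x
    have hd := (((hasDerivAt_exp_mul_sq (-(1 / a)) x).mul (hJd x)).const_mul (-4 / a)).deriv
    have he : exp (-(1 / a) * x ^ 2) * exp (1 / a * x ^ 2) = 1 := by
      rw [← exp_add]
      simp
    have hd' : deriv V x = -4 / a * (exp (-(1 / a) * x ^ 2) * (-(1 / a) * (2 * x)) * J x +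
        exp (-(1 / a) * x ^ 2) * g x) := by
      rw [hV]
      exact hd
    have hgx : exp (-(1 / a) * x ^ 2) * g x = F x := by
      rw [hg]
      linear_combination F x * he
    rw [hd', hgx, hV]
    field_simp
    ring
  refine ⟨V, memGaussianClass_of_first_order ha hF (by rw [hV]; fun_prop) ?_ heq, heq⟩
  rw [hV]
  refine GaussianDecay.const_mul _ (GaussianDecay.of_le_mul fun κ' h0 h1 => ?_)
  obtain ⟨C, hC⟩ := hJb κ' h0 h1
  refine ⟨C, fun τ hτ => ?_⟩
  rw [abs_mul, abs_of_pos (exp_pos _)]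
  calc exp (-(1 / a) * τ ^ 2) * |J τ|
      ≤ exp (-(1 / a) * τ ^ 2) * (C * exp ((1 / a - κ') * τ ^ 2) * τ) := by
        gcongr
        exact hC τ hτ
    _ = τ * (C * (exp (-(1 / a) * τ ^ 2) * exp ((1 / a - κ') * τ ^ 2))) := by ring
    _ = τ * (C * exp (-κ' * τ ^ 2)) := by
        rw [← exp_add]
        ring_nf

/-- The equation of the model problem, imposed on the whole line. -/
def SolvesModelODE (a : ℝ) (k : ℕ) (F U : ℝ → ℝ) : Prop :=
  ∀ x : ℝ, a * deriv (deriv U) x + 2 * x * deriv U x - 2 * (k : ℝ) * U x = -4 * F x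

/-- Integrating the differentiated equation from `+∞` raises `k` by one. -/
lemma SolvesModelODE.succ_of_deriv {a κ : ℝ} (hκ : 0 < κ) {k : ℕ} {F U : ℝ → ℝ}
    (hF : MemGaussianClass κ F) (hU : MemGaussianClass κ U)
    (h : SolvesModelODE a k (deriv F) (deriv U)) : SolvesModelODE a (k + 1) F U := by
  obtain ⟨E, hE⟩ : ∃ E : ℝ → ℝ, E = fun x => (a * deriv (deriv U) x + 2 * (x * deriv U x)) +
      (-(2 * ((k : ℝ) + 1)) * U x + 4 * F x) := ⟨_, rfl⟩
  have hEd : ∀ x, HasDerivAt E 0 x := by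
    intro x
    have h1 := (hU.deriv.deriv.differentiable x).hasDerivAt.const_mul a
    have h2 := ((hasDerivAt_id x).mul (hU.deriv.differentiable x).hasDerivAt).const_mul 2
    have h3 := (hU.differentiable x).hasDerivAt.const_mul (-(2 * ((k : ℝ) + 1)))
    have h4 := (hF.differentiable x).hasDerivAt.const_mul 4
    rw [hE]
    refine ((h1.add h2).add (h3.add h4)).congr_deriv ?_
    have := h x
    simp only [id_eq]
    linear_combination this
  have hlim : Tendsto E atTop (𝓝 0) := by
    rw [hE]
    exact (((hU.deriv.deriv.decay.const_mul a).add (hU.deriv.decay.id_mul.const_mul 2)).add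
      ((hU.decay.const_mul _).add (hF.decay.const_mul 4))).tendsto_zero hκ
  intro x
  have hconst : E = fun _ => E x := funext fun y =>
    is_const_of_deriv_eq_zero (fun z => (hEd z).differentiableAt) (fun z => (hEd z).deriv) y x
  have hEx : E x = 0 := by
    rw [hconst] at hlim
    exact tendsto_nhds_unique tendsto_const_nhds hlim
  rw [hE] at hEx
  push_cast
  linear_combination hEx

lemma exists_solvesModelODE {a κ : ℝ} (ha : 0 < a) (hκ0 : 0 < κ) (hκ : κ ≤ 1 / a) (k : ℕ)
    {F : ℝ → ℝ} (hF : MemGaussianClass κ F) :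
    ∃ U, MemGaussianClass κ U ∧ SolvesModelODE a k F U := by
  induction k generalizing F with
  | zero =>
    obtain ⟨V, hV, heq⟩ := exists_first_order_solution ha hκ hF
    obtain ⟨U, hU, hUV⟩ := hV.exists_antideriv hκ0
    have hd : deriv U = V := funext fun x => (hUV x).deriv
    refine ⟨U, hU, fun x => ?_⟩
    simpa [hd] using heq x
  | succ k ih =>
    obtain ⟨V, hV, heq⟩ := ih hF.deriv
    obtain ⟨U, hU, hUV⟩ := hV.exists_antideriv hκ0
    have hd : deriv U = V := funext fun x => (hUV x).deriv
    exact ⟨U, hU, SolvesModelODE.succ_of_deriv hκ0 hF hU (hd ▸ heq)⟩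

lemma MemGaussianClass.pos_of_deriv_neg {κ : ℝ} (hκ : 0 < κ) {U : ℝ → ℝ}
    (hU : MemGaussianClass κ U) (h : ∀ x, _root_.deriv U x < 0) (x : ℝ) : 0 < U x := by
  have hanti : StrictAnti U := strictAnti_of_deriv_neg h
  exact (hanti.antitone.le_of_tendsto (hU.decay.tendsto_zero hκ) (x + 1)).trans_lt
    (hanti (lt_add_one x))

/-- A positive solution of the homogeneous equation: an iterated complementary error function. -/
lemma exists_pos_homogeneous_solution {a κ : ℝ} (ha : 0 < a) (hκ0 : 0 < κ) (hκ : κ ≤ 1 / a)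
    (k : ℕ) :
    ∃ W, MemGaussianClass κ W ∧ (∀ x, 0 < W x) ∧ SolvesModelODE a k (fun _ => 0) W := by
  induction k with
  | zero =>
    obtain ⟨W, hW, hWV⟩ := ((memGaussianClass_gaussian ha hκ).const_mul (-1)).exists_antideriv hκ0
    have hd : deriv W = fun x => -1 * exp (-(1 / a) * x ^ 2) := funext fun x => (hWV x).deriv
    refine ⟨W, hW, hW.pos_of_deriv_neg hκ0 fun x => ?_, fun x => ?_⟩
    · rw [hd]
      linarith [exp_pos (-(1 / a) * x ^ 2)]
    · rw [hd, ((hasDerivAt_exp_mul_sq _ x).const_mul (-1)).deriv]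
      push_cast
      field_simp
      ring
  | succ k ih =>
    obtain ⟨V, hV, hpos, heq⟩ := ih
    obtain ⟨W, hW, hWV⟩ := (hV.const_mul (-1)).exists_antideriv hκ0
    have hd : deriv W = fun x => -1 * V x := funext fun x => (hWV x).deriv
    refine ⟨W, hW, hW.pos_of_deriv_neg hκ0 fun x => ?_,
      SolvesModelODE.succ_of_deriv hκ0 (memGaussianClass_zero κ) hW fun x => ?_⟩
    · rw [hd]
      linarith [hpos x]
    · have hd1 : deriv (fun x => -1 * V x) = fun x => -1 * deriv V x :=
        funext fun y => ((hV.differentiable y).hasDerivAt.const_mul (-1)).deriv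
      rw [hd, hd1, ((hV.deriv.differentiable x).hasDerivAt.const_mul (-1)).deriv, deriv_const]
      linear_combination -heq x

/-- Dirichlet half-line model problem: Let `a > 0`, `0 < κ ≤ 1/a`,
`k ∈ ℕ`, `G ∈ ℝ`, and `F ∈ ℰ(κ)`. Then there exists `U ∈ ℰ(κ)` with
`a U''(ν) + 2ν U'(ν) − 2k U(ν) = −4 F(ν)` for all `ν ≥ 0` and `U(0) = G`. -/
theorem zaremba_dirichlet_model_problem
    (a κ : ℝ) (ha : 0 < a) (hκ0 : 0 < κ) (hκ : κ ≤ 1 / a)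
    (k : ℕ) (G : ℝ) (F : ℝ → ℝ) (hF : MemGaussianClass κ F) :
    ∃ U : ℝ → ℝ, MemGaussianClass κ U ∧
      (∀ ν : ℝ, 0 ≤ ν →
        a * deriv (deriv U) ν + 2 * ν * deriv U ν - 2 * (k : ℝ) * U ν = -4 * F ν) ∧
      U 0 = G := by
  obtain ⟨P, hP, hPeq⟩ := exists_solvesModelODE ha hκ0 hκ k hF
  obtain ⟨W, hW, hpos, hWeq⟩ := exists_pos_homogeneous_solution ha hκ0 hκ k
  obtain ⟨c, hc⟩ : ∃ c, c = (G - P 0) / W 0 := ⟨_, rfl⟩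
  have hd : deriv (fun x => P x + c * W x) = fun x => deriv P x + c * deriv W x :=
    funext fun x => ((hP.differentiable x).hasDerivAt.add
      ((hW.differentiable x).hasDerivAt.const_mul c)).deriv
  refine ⟨fun x => P x + c * W x, hP.add (hW.const_mul c), fun ν _ => ?_, ?_⟩
  · have hd2 : deriv (fun x => deriv P x + c * deriv W x) ν =
        deriv (deriv P) ν + c * deriv (deriv W) ν :=
      ((hP.deriv.differentiable ν).hasDerivAt.add
        ((hW.deriv.differentiable ν).hasDerivAt.const_mul c)).deriv
    rw [hd, hd2]
    linear_combination hPeq ν + c * hWeq ν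
  · have := (hpos 0).ne'
    simp only [hc]
    field_simp
    ring
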